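/- Let V^⊥ = {v ∈ V : B(v,u) = 0 for all u ∈ V} be the radical of B, and define E₂° = ⋃ L(α, ρ̂) ∩ Q̂ over all α ∈ Δ and ρ ∈ Φ⁺ with ρ̂ ≠ α. If ℓ ∈ E(Φ) and ℓ ∉ V^⊥, then ℓ lies in the topological closure of E₂°. -/

import Mathlib

open Filter Topology

noncomputable section

variable {ι V : Type*} [Fintype ι] [NormedAddCommGroup V] [NormedSpace ℝ V]

/-- The set of simple `B`-reflections: the linear automorphisms of `V` given by the
`B`-reflection formula `u ↦ u - 2 (B α u / B α α) • α` associated to a simple root `α ∈ Δ`. -/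
def simpleReflections (B : LinearMap.BilinForm ℝ V) (Δ : Module.Basis ι ℝ V) :
    Set (V ≃ₗ[ℝ] V) :=
  { e | ∃ i : ι, ∀ u : V, e u = u - (2 * B (Δ i) u / B (Δ i) (Δ i)) • Δ i }

/-- The geometric Coxeter group `W`: the subgroup of linear automorphisms of `V`
generated by the simple `B`-reflections. -/
def cox (B : LinearMap.BilinForm ℝ V) (Δ : Module.Basis ι ℝ V) : Subgroup (V ≃ₗ[ℝ] V) :=
  Subgroup.closure (simpleReflections B Δ)

/-- The root system `Φ = W ⬝ Δ`. -/
def Phi (B : LinearMap.BilinForm ℝ V) (Δ : Module.Basis ι ℝ V) : Set V :=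
  { ρ | ∃ w ∈ cox B Δ, ∃ i : ι, w (Δ i) = ρ }

/-- The positive roots `Φ⁺ = Φ ∩ cone(Δ)`. -/
def posPhi (B : LinearMap.BilinForm ℝ V) (Δ : Module.Basis ι ℝ V) : Set V :=
  { ρ ∈ Phi B Δ | ∀ i : ι, 0 ≤ Δ.repr ρ i }

/-- `|v|₁`: the sum of the coordinates of `v` in the basis `Δ`. -/
def l1 (Δ : Module.Basis ι ℝ V) (v : V) : ℝ := ∑ i : ι, Δ.repr v i

/-- The normalization map `v ↦ v̂ = v / |v|₁`. -/
def nrm (Δ : Module.Basis ι ℝ V) (v : V) : V := (l1 Δ v)⁻¹ • v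

/-- The set `Φ̂` of normalized roots. -/
def nPhi (B : LinearMap.BilinForm ℝ V) (Δ : Module.Basis ι ℝ V) : Set V :=
  nrm Δ '' posPhi B Δ

/-- `E(Φ)`: the set of accumulation points of the set of normalized roots. -/
def Eset (B : LinearMap.BilinForm ℝ V) (Δ : Module.Basis ι ℝ V) : Set V :=
  { x | AccPt x (𝓟 (nPhi B Δ)) }

/-- The isotropic cone `Q` of `B`. -/
def isoQ (B : LinearMap.BilinForm ℝ V) : Set V := { v | B v v = 0 }

/-- The affine line through two points `a` and `b`. -/
def lineThrough (a b : V) : Set V := { y : V | ∃ t : ℝ, y = a + t • (b - a) }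

/-- `E₂`: the union over all pairs of distinct positive roots `ρ₁, ρ₂` of
`L(ρ̂₁, ρ̂₂) ∩ Q̂`. -/
def E2 (B : LinearMap.BilinForm ℝ V) (Δ : Module.Basis ι ℝ V) : Set V :=
  { x : V | ∃ ρ₁ ∈ posPhi B Δ, ∃ ρ₂ ∈ posPhi B Δ, ρ₁ ≠ ρ₂ ∧
      x ∈ lineThrough (nrm Δ ρ₁) (nrm Δ ρ₂) ∧ B x x = 0 ∧ l1 Δ x = 1 }

/-- `E₂°`: the union over all `α ∈ Δ` and `ρ ∈ Φ⁺` with `ρ̂ ≠ α` of `L(α, ρ̂) ∩ Q̂`. -/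
def E2circ (B : LinearMap.BilinForm ℝ V) (Δ : Module.Basis ι ℝ V) : Set V :=
  { x : V | ∃ i : ι, ∃ ρ ∈ posPhi B Δ, nrm Δ ρ ≠ Δ i ∧
      x ∈ lineThrough (Δ i) (nrm Δ ρ) ∧ B x x = 0 ∧ l1 Δ x = 1 }

/-!
Let `ℓ` be an accumulation point of normalized roots.

First, `B ℓ ℓ = 0`. Otherwise `x ↦ s_x` is continuous at `ℓ`, so that for two distinct normalized
roots `x`, `y` close to `ℓ` the product `s_x s_y` is close to `s_ℓ s_ℓ = 1`. But `W` is discrete: a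
nontrivial `w` has a right descent `α`, and then `w α` has nonpositive coordinates, far from `α`.
Hence `s_x s_y = 1`, and `x = y`. That `w α` is a nonnegative or nonpositive combination of simple
roots according to the descents of `w` is proved by induction on the length of `w`, reducing to
dihedral groups, whose roots have values of Chebyshev polynomials of the second kind as coordinates.

Next, `ℓ` is not in the radical, so `B α ℓ ≠ 0` for some simple root `α`. The point `x + τ α` is
isotropic when `τ ^ 2 + 2 (B α x) τ + B x x = 0`. At `x = ℓ` this equation has the simple root `0`,
which continues to a small real root `τ` for `x` near `ℓ`. For normalized roots `x` tending to `ℓ`,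
the normalizations of `x + τ α` lie in `E₂°` and tend to `ℓ`.
-/

section Development

open CoxeterSystem Polynomial.Chebyshev Real

section AlternatingWord

variable {κ G : Type*} [Group G] {M : CoxeterMatrix κ} (cs : CoxeterSystem M G)

lemma exists_eq_mul_wordProd_alternatingWord (w : G) {s t : κ} (hs : ¬cs.IsRightDescent w s) :
    ∃ v k, w = v * cs.wordProd (alternatingWord s t k) ∧ cs.length w = cs.length v + k ∧
      ¬cs.IsRightDescent v s ∧ ¬cs.IsRightDescent v t := by
  induction hn : cs.length w generalizing w s t with
  | zero => exact ⟨w, 0, by simp [alternatingWord], by omega, hs, by simp [IsRightDescent, hn]⟩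
  | succ n ih =>
    by_cases ht : cs.IsRightDescent w t
    · have hlen := cs.isRightDescent_iff.1 ht
      obtain ⟨v, k, hw, hk, hvt, hvs⟩ :=
        ih (w * cs.simple t) (cs.isRightDescent_iff_not_isRightDescent_mul.1 ht) (by omega)
      refine ⟨v, k + 1, ?_, by omega, hvs, hvt⟩
      rw [alternatingWord_succ, cs.wordProd_concat, ← mul_assoc, ← hw,
        cs.simple_mul_simple_cancel_right]
    · exact ⟨w, 0, by simp [alternatingWord], by omega, hs, ht⟩

lemma lt_of_not_isRightDescent_mul_alternatingWord {v : G} {s t : κ} {k : ℕ}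
    (hlen : cs.length (v * cs.wordProd (alternatingWord s t k)) = cs.length v + k)
    (hs : ¬cs.IsRightDescent (v * cs.wordProd (alternatingWord s t k)) s) (hM : M s t ≠ 0) :
    k < M s t := by
  by_contra! hk
  rw [M.symmetric] at hM hk
  apply cs.not_isReduced_alternatingWord t s hM (m := k + 1) (by omega)
  have hws := cs.not_isRightDescent_iff.1 hs
  rw [mul_assoc, ← cs.wordProd_concat, ← alternatingWord_succ] at hws
  have h_upper := cs.length_wordProd_le (alternatingWord t s (k + 1))
  have h_lower := cs.length_mul_le v (cs.wordProd (alternatingWord t s (k + 1)))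
  rw [length_alternatingWord] at h_upper
  rw [CoxeterSystem.IsReduced, length_alternatingWord]
  omega

end AlternatingWord

section FormReflection

variable {K E : Type*} [Field K] [AddCommGroup E] [Module K E] (B : LinearMap.BilinForm K E)

/-- The `B`-reflection `s_v` of the paper. When `B v v = 0` the division by zero makes it the
identity. -/
def formReflection (v : E) : Module.End K E := Module.preReflection v ((2 / B v v) • B v)

lemma formReflection_apply (v u : E) :
    formReflection B v u = u - (2 * B v u / B v v) • v := by
  simp [formReflection, Module.preReflection_apply, div_mul_eq_mul_div]

lemma formReflection_apply_of_form_self_eq_one {v : E} (hv : B v v = 1) (u : E) :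
    formReflection B v u = u - (2 * B v u) • v := by
  rw [formReflection_apply, hv, div_one]

variable {B}

lemma formReflection_apply_self {v : E} (hv : B v v ≠ 0) : formReflection B v v = -v :=
  Module.preReflection_apply_self (by simp [hv])

lemma formReflection_apply_apply {v : E} (hv : B v v ≠ 0) (u : E) :
    formReflection B v (formReflection B v u) = u :=
  Module.involutive_preReflection (by simp [hv]) u

lemma formReflection_mul_self {v : E} (hv : B v v ≠ 0) :
    formReflection B v * formReflection B v = 1 :=
  LinearMap.ext (formReflection_apply_apply hv)

lemma formReflection_smul {c : K} (hc : c ≠ 0) (v : E) :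
    formReflection B (c • v) = formReflection B v := by
  ext u
  simp only [formReflection_apply, map_smul, LinearMap.smul_apply, smul_eq_mul, smul_smul]
  congr 2
  field_simp

lemma form_formReflection_formReflection (hB : B.IsSymm) {v : E} (hv : B v v ≠ 0) (u u' : E) :
    B (formReflection B v u) (formReflection B v u') = B u u' := by
  simp only [formReflection_apply, map_sub, map_smul, LinearMap.sub_apply, LinearMap.smul_apply,
    smul_eq_mul, hB.eq u v]
  field_simp
  ring

lemma map_formReflection {g : Module.End K E} (hg : ∀ u u', B (g u) (g u') = B u u') (v u : E) :
    g (formReflection B v u) = formReflection B (g v) (g u) := by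
  simp only [formReflection_apply, map_sub, map_smul, hg]

end FormReflection

section Dihedral

variable {K E : Type*} [Field K] [AddCommGroup E] [Module K E] {B : LinearMap.BilinForm K E}
  {a b : E} {c : K}

lemma formReflection_chebyshev_smul_add (hb : B b b = 1) (hba : B b a = -c) (n : ℤ) :
    formReflection B b ((U K n).eval c • a + (U K (n - 1)).eval c • b) =
      (U K n).eval c • a + (U K (n + 1)).eval c • b := by
  rw [formReflection_apply_of_form_self_eq_one B hb, U_add_one]
  simp only [map_add, map_smul, smul_eq_mul, hb, hba, Polynomial.eval_sub, Polynomial.eval_mul,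
    Polynomial.eval_X, Polynomial.eval_ofNat]
  module

lemma formReflection_mul_pow_apply_left (hB : B.IsSymm) (ha : B a a = 1) (hb : B b b = 1)
    (hab : B a b = -c) (k : ℕ) :
    ((formReflection B a * formReflection B b) ^ k) a =
      (U K (2 * k)).eval c • a + (U K (2 * k - 1)).eval c • b := by
  have hba : B b a = -c := by rw [hB.eq, hab]
  induction k with
  | zero => simp
  | succ k ih =>
    have hstep := formReflection_chebyshev_smul_add ha hab (2 * k + 1)
    rw [add_sub_cancel_right, add_assoc, one_add_one_eq_two, add_comm] at hstep
    rw [pow_succ', Module.End.mul_apply, ih, Module.End.mul_apply,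
      formReflection_chebyshev_smul_add hb hba, hstep]
    push_cast
    ring_nf
    abel

lemma exists_form_sub_smul_sub_smul_eq_zero (hB : B.IsSymm) (ha : B a a = 1) (hb : B b b = 1)
    (hab : B a b = -c) (hc : 1 - c ^ 2 ≠ 0) (u : E) :
    ∃ x y : K, B a (u - x • a - y • b) = 0 ∧ B b (u - x • a - y • b) = 0 := by
  refine ⟨(B a u + c * B b u) / (1 - c ^ 2), (B b u + c * B a u) / (1 - c ^ 2), ?_, ?_⟩ <;>
  · simp only [map_sub, map_smul, smul_eq_mul, ha, hb, hab, hB.eq b a]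
    field_simp
    ring

end Dihedral

section ChebyshevReal

lemma U_eval_cos_of_sin_ne_zero {θ : ℝ} (hθ : sin θ ≠ 0) (n : ℤ) :
    (U ℝ n).eval (cos θ) = sin ((n + 1) * θ) / sin θ :=
  eq_div_of_mul_eq hθ (U_real_cos θ n)

lemma sin_pi_div_natCast_pos {m : ℕ} (hm : 2 ≤ m) : 0 < sin (π / m) :=
  sin_pos_of_pos_of_lt_pi (by positivity) (div_lt_self pi_pos (by exact_mod_cast hm))

lemma U_eval_nonneg_of_one_le {c : ℝ} (hc : 1 ≤ c) {n : ℤ} (hn : -1 ≤ n) :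
    0 ≤ (U ℝ n).eval c := by
  suffices h : 0 ≤ (U ℝ n).eval c ∧ (U ℝ n).eval c ≤ (U ℝ (n + 1)).eval c from h.1
  induction n, hn using Int.leInduction with
  | base => simp
  | succ n _ ih =>
    refine ⟨ih.1.trans ih.2, ?_⟩
    rw [U_add_one ℝ (n + 1), add_sub_cancel_right, Polynomial.eval_sub, Polynomial.eval_mul,
      Polynomial.eval_mul, Polynomial.eval_X, Polynomial.eval_ofNat]
    nlinarith

lemma U_eval_cos_pi_div_nonneg {m : ℕ} (hm : 2 ≤ m) {n : ℤ} (hn : -1 ≤ n) (hnm : n + 1 ≤ m) :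
    0 ≤ (U ℝ n).eval (cos (π / m)) := by
  rw [U_eval_cos_of_sin_ne_zero (sin_pi_div_natCast_pos hm).ne']
  have hn' : (0 : ℝ) ≤ n + 1 := by exact_mod_cast (by omega : 0 ≤ n + 1)
  have hnm' : (n + 1 : ℝ) ≤ m := by exact_mod_cast hnm
  refine div_nonneg (sin_nonneg_of_nonneg_of_le_pi (by positivity) ?_)
    (sin_pi_div_natCast_pos hm).le
  calc (n + 1 : ℝ) * (π / m) ≤ m * (π / m) := by gcongr
    _ = π := by field_simp

end ChebyshevReal

section FiniteDihedral

variable {E : Type*} [AddCommGroup E] [Module ℝ E] {B : LinearMap.BilinForm ℝ E} {a b : E} {m : ℕ}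

lemma formReflection_mul_pow_apply_left_of_cos (hB : B.IsSymm) (ha : B a a = 1) (hb : B b b = 1)
    (hm : 2 ≤ m) (hab : B a b = -cos (π / m)) :
    ((formReflection B a * formReflection B b) ^ m) a = a := by
  have hm0 : (m : ℝ) ≠ 0 := by positivity
  have hsin := (sin_pi_div_natCast_pos hm).ne'
  have hU : (U ℝ (2 * m)).eval (cos (π / m)) = 1 := by
    rw [U_eval_cos_of_sin_ne_zero hsin, div_eq_one_iff_eq hsin]
    convert sin_add_two_pi (π / m) using 2
    push_cast
    field_simp
    ring
  have hU' : (U ℝ (2 * m - 1)).eval (cos (π / m)) = 0 := by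
    rw [U_eval_cos_of_sin_ne_zero hsin, div_eq_zero_iff]
    left
    convert sin_two_pi using 2
    push_cast
    field_simp
    ring
  rw [formReflection_mul_pow_apply_left hB ha hb hab, hU, hU', one_smul, zero_smul, add_zero]

lemma formReflection_mul_pow_eq_one_of_cos (hB : B.IsSymm) (ha : B a a = 1) (hb : B b b = 1)
    (hm : 2 ≤ m) (hab : B a b = -cos (π / m)) :
    (formReflection B a * formReflection B b) ^ m = 1 := by
  have fix_a := formReflection_mul_pow_apply_left_of_cos hB ha hb hm hab
  have fix_b : ((formReflection B a * formReflection B b) ^ m) b = b := by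
    have hinv : (formReflection B a * formReflection B b) *
        (formReflection B b * formReflection B a) = 1 := by
      rw [mul_assoc, ← mul_assoc (formReflection B b), formReflection_mul_self (by simp [hb]),
        one_mul, formReflection_mul_self (by simp [ha])]
    calc ((formReflection B a * formReflection B b) ^ m) b
        = ((formReflection B a * formReflection B b) ^ m)
            (((formReflection B b * formReflection B a) ^ m) b) := by
          rw [formReflection_mul_pow_apply_left_of_cos hB hb ha hm (by rw [hB.eq, hab])]
      _ = b := by rw [← Module.End.mul_apply, pow_mul_pow_eq_one m hinv, Module.End.one_apply]
  have fix_orthogonal {z : E} (hza : B a z = 0) (hzb : B b z = 0) :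
      ((formReflection B a * formReflection B b) ^ m) z = z := by
    rw [Module.End.pow_apply]
    exact Function.iterate_fixed (by simp [formReflection_apply, hza, hzb]) m
  have hcos : 1 - cos (π / m) ^ 2 ≠ 0 := by
    rw [← sin_sq]
    exact pow_ne_zero 2 (sin_pi_div_natCast_pos hm).ne'
  ext u
  obtain ⟨x, y, hza, hzb⟩ := exists_form_sub_smul_sub_smul_eq_zero hB ha hb hab hcos u
  have hu : u = (u - x • a - y • b) + x • a + y • b := by abel
  rw [hu, map_add, map_add, map_smul, map_smul, fix_a, fix_b, fix_orthogonal hza hzb,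
    Module.End.one_apply]

end FiniteDihedral

section GeometricRepresentation

variable {κ E : Type*} [AddCommGroup E] [Module ℝ E]

/-- A symmetric form `B` and a family `α` of vectors are compatible with the Coxeter matrix `M` when
`B (α s) (α t) = -cos (π / M s t)`, where the entry `M s t = 0`, which encodes `∞`, allows any value
at most `-1`. The diagonal entries `M s s = 1` make every `α s` a unit vector. -/
structure IsCoxeterForm (M : CoxeterMatrix κ) (B : LinearMap.BilinForm ℝ E) (α : κ → E) :
    Prop where
  isSymm : B.IsSymm
  apply_of_ne_zero : ∀ s t, M s t ≠ 0 → B (α s) (α t) = -cos (π / M s t)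
  apply_le_of_eq_zero : ∀ s t, M s t = 0 → B (α s) (α t) ≤ -1

namespace IsCoxeterForm

variable {M : CoxeterMatrix κ} {B : LinearMap.BilinForm ℝ E} {α : κ → E}

lemma apply_self (h : IsCoxeterForm M B α) (s : κ) : B (α s) (α s) = 1 := by
  simp [h.apply_of_ne_zero s s (by simp)]

lemma apply_self_ne_zero (h : IsCoxeterForm M B α) (s : κ) : B (α s) (α s) ≠ 0 := by
  simp [h.apply_self]

lemma isLiftable (h : IsCoxeterForm M B α) :
    M.IsLiftable fun s ↦ formReflection B (α s) := by
  intro s t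
  rcases eq_or_ne s t with rfl | hst
  · rw [M.diagonal, pow_one, formReflection_mul_self (h.apply_self_ne_zero s)]
  rcases eq_or_ne (M s t) 0 with hM | hM
  · rw [hM, pow_zero]
  have hM1 := M.off_diagonal s t hst
  exact formReflection_mul_pow_eq_one_of_cos h.isSymm (h.apply_self s) (h.apply_self t)
    (by omega) (h.apply_of_ne_zero s t hM)

lemma chebyshev_nonneg (h : IsCoxeterForm M B α) {s t : κ} (hst : s ≠ t) {k : ℕ}
    (hk : M s t ≠ 0 → k < M s t) :
    0 ≤ (U ℝ k).eval (-B (α s) (α t)) ∧ 0 ≤ (U ℝ (k - 1)).eval (-B (α s) (α t)) := by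
  rcases eq_or_ne (M s t) 0 with hM | hM
  · have hc := le_neg_of_le_neg (h.apply_le_of_eq_zero s t hM)
    exact ⟨U_eval_nonneg_of_one_le hc (by omega), U_eval_nonneg_of_one_le hc (by omega)⟩
  · have hM1 := M.off_diagonal s t hst
    have hkM := hk hM
    rw [h.apply_of_ne_zero s t hM, neg_neg]
    exact ⟨U_eval_cos_pi_div_nonneg (by omega) (by omega) (by omega),
      U_eval_cos_pi_div_nonneg (by omega) (by omega) (by omega)⟩

variable {G : Type*} [Group G] (cs : CoxeterSystem M G)

/-- The representation of a Coxeter group in which the simple reflection `s` acts as the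
`B`-reflection in `α s`. -/
def geometricRepresentation (h : IsCoxeterForm M B α) : Representation ℝ G E :=
  cs.lift ⟨fun s ↦ formReflection B (α s), h.isLiftable⟩

lemma geometricRepresentation_simple (h : IsCoxeterForm M B α) (s : κ) :
    h.geometricRepresentation cs (cs.simple s) = formReflection B (α s) :=
  cs.lift_apply_simple h.isLiftable s

lemma form_geometricRepresentation (h : IsCoxeterForm M B α) (w : G) (u u' : E) :
    B (h.geometricRepresentation cs w u) (h.geometricRepresentation cs w u') = B u u' := by
  induction w using cs.simple_induction_left with
  | one => simp
  | mul_simple_left w s ih =>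
    rw [map_mul, Module.End.mul_apply, Module.End.mul_apply, h.geometricRepresentation_simple,
      form_formReflection_formReflection h.isSymm (h.apply_self_ne_zero s), ih]

lemma geometricRepresentation_alternatingWord_apply (h : IsCoxeterForm M B α) (s t : κ) (k : ℕ) :
    h.geometricRepresentation cs (cs.wordProd (alternatingWord s t k)) (α s) =
      (U ℝ k).eval (-B (α s) (α t)) • α (if Even k then s else t) +
        (U ℝ (k - 1)).eval (-B (α s) (α t)) • α (if Even k then t else s) := by
  have hst : B (α s) (α t) = -(-B (α s) (α t)) := (neg_neg _).symm
  have hts : B (α t) (α s) = -(-B (α s) (α t)) := by rw [neg_neg, h.isSymm.eq]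
  have hpow := formReflection_mul_pow_apply_left h.isSymm (h.apply_self s) (h.apply_self t) hst
  rw [cs.prod_alternatingWord_eq_mul_pow, map_mul, map_pow, map_mul,
    h.geometricRepresentation_simple, h.geometricRepresentation_simple, Module.End.mul_apply, hpow]
  obtain ⟨n, rfl | rfl⟩ := k.even_or_odd'
  · simp
  · have hodd : ¬Even (2 * n + 1) := by simp
    rw [show (2 * n + 1) / 2 = n by omega, if_neg hodd, if_neg hodd, if_neg hodd,
      h.geometricRepresentation_simple,
      formReflection_chebyshev_smul_add (h.apply_self t) hts, add_comm]
    push_cast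
    rw [add_sub_cancel_right]

theorem geometricRepresentation_apply_mem_hull (h : IsCoxeterForm M B α) {w : G} {s : κ}
    (hs : ¬cs.IsRightDescent w s) :
    h.geometricRepresentation cs w (α s) ∈ PointedCone.hull ℝ (Set.range α) := by
  induction hn : cs.length w using Nat.strong_induction_on generalizing w s with
  | _ n ih =>
    rcases eq_or_ne w 1 with rfl | hw
    · simpa using PointedCone.subset_hull (Set.mem_range_self s)
    -- With `w = v * (alternating word in s, t)` of maximal length, `w (α s)` is a combination of
    -- `v (α s)` and `v (α t)` with Chebyshev coefficients, and `v` has neither `s` nor `t` as a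
    -- descent.
    obtain ⟨t, ht⟩ := cs.exists_rightDescent_of_ne_one hw
    have hst : s ≠ t := by rintro rfl; exact hs ht
    obtain ⟨v, k, rfl, hlen, hvs, hvt⟩ := exists_eq_mul_wordProd_alternatingWord cs w (t := t) hs
    have hk : 0 < k := by
      by_contra! hk0
      obtain rfl : k = 0 := by omega
      exact hvt (by simpa [alternatingWord] using ht)
    have hmem (i : κ) (hi : i = s ∨ i = t) :
        h.geometricRepresentation cs v (α i) ∈ PointedCone.hull ℝ (Set.range α) := by
      rcases hi with rfl | rfl
      · exact ih _ (by omega) hvs rfl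
      · exact ih _ (by omega) hvt rfl
    obtain ⟨hU, hU'⟩ := h.chebyshev_nonneg hst
      (lt_of_not_isRightDescent_mul_alternatingWord cs hlen hs)
    rw [map_mul, Module.End.mul_apply, h.geometricRepresentation_alternatingWord_apply, map_add,
      map_smul, map_smul]
    exact add_mem (PointedCone.smul_mem _ hU (hmem _ (by split_ifs <;> simp)))
      (PointedCone.smul_mem _ hU' (hmem _ (by split_ifs <;> simp)))

theorem neg_geometricRepresentation_apply_mem_hull (h : IsCoxeterForm M B α) {w : G} {s : κ}
    (hs : cs.IsRightDescent w s) :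
    -h.geometricRepresentation cs w (α s) ∈ PointedCone.hull ℝ (Set.range α) := by
  have hws := h.geometricRepresentation_apply_mem_hull cs
    (cs.isRightDescent_iff_not_isRightDescent_mul.1 hs)
  rwa [map_mul, Module.End.mul_apply, h.geometricRepresentation_simple,
    formReflection_apply_self (h.apply_self_ne_zero s), map_neg] at hws

end IsCoxeterForm

end GeometricRepresentation

section ExistsCoxeterMatrix

lemma neg_cos_pi_div_ne_one {k : ℕ} (hk : 2 ≤ k) : -cos (π / k) ≠ 1 := by
  intro hcos
  nlinarith [sin_sq_add_cos_sq (π / k), sin_pi_div_natCast_pos hk]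

lemma exists_coxeterMatrix_entry {b : ℝ}
    (hb : b = 1 ∨ b ≤ -1 ∨ ∃ k : ℕ, 2 ≤ k ∧ b = -cos (π / k)) :
    ∃ m : ℕ, (m = 1 ↔ b = 1) ∧ (m ≠ 0 → b = -cos (π / m)) ∧ (m = 0 → b ≤ -1) := by
  rcases hb with rfl | hb | ⟨k, hk, rfl⟩
  · exact ⟨1, by simp⟩
  · exact ⟨0, by simp [show b ≠ 1 by linarith], by simp, fun _ ↦ hb⟩
  · exact ⟨k, iff_of_false (by omega) (neg_cos_pi_div_ne_one hk), fun _ ↦ rfl, by omega⟩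

lemma exists_coxeterMatrix_isCoxeterForm {κ E : Type*} [AddCommGroup E] [Module ℝ E]
    {B : LinearMap.BilinForm ℝ E} (hB : B.IsSymm) {α : κ → E} (hdiag : ∀ s, B (α s) (α s) = 1)
    (hoff : ∀ s t, s ≠ t →
      B (α s) (α t) ≤ -1 ∨ ∃ k : ℕ, 2 ≤ k ∧ B (α s) (α t) = -cos (π / k)) :
    ∃ M : CoxeterMatrix κ, IsCoxeterForm M B α := by
  have hvalue (s t : κ) : B (α s) (α t) = 1 ∨ B (α s) (α t) ≤ -1 ∨
      ∃ k : ℕ, 2 ≤ k ∧ B (α s) (α t) = -cos (π / k) := by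
    rcases eq_or_ne s t with rfl | hst
    exacts [Or.inl (hdiag s), Or.inr (hoff s t hst)]
  have hne_one {s t : κ} (hst : s ≠ t) : B (α s) (α t) ≠ 1 := by
    rcases hoff s t hst with h | ⟨k, hk, h⟩
    · linarith
    · exact h ▸ neg_cos_pi_div_ne_one hk
  choose! m hm using fun b : ℝ ↦ exists_coxeterMatrix_entry (b := b)
  exact ⟨{ M := Matrix.of fun s t ↦ m (B (α s) (α t))
           isSymm := Matrix.IsSymm.ext fun s t ↦ by simp [hB.eq (α t) (α s)]
           diagonal := fun s ↦ (hm _ (hvalue s s)).1.2 (hdiag s)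
           off_diagonal := fun s t hst ↦ mt (hm _ (hvalue s t)).1.1 (hne_one hst) },
    hB, fun s t ↦ (hm _ (hvalue s t)).2.1, fun s t ↦ (hm _ (hvalue s t)).2.2⟩

end ExistsCoxeterMatrix

section Discreteness

variable {κ E G : Type*} [AddCommGroup E] [Module ℝ E] [Group G] {M : CoxeterMatrix κ}
  {B : LinearMap.BilinForm ℝ E} {Δ : Module.Basis κ ℝ E} (cs : CoxeterSystem M G)

lemma repr_nonneg_of_mem_hull {v : E} (hv : v ∈ PointedCone.hull ℝ (Set.range Δ)) (i : κ) :
    0 ≤ Δ.repr v i := by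
  induction hv using Submodule.span_induction with
  | mem v hv =>
    obtain ⟨j, rfl⟩ := hv
    rw [Δ.repr_self]
    exact Finsupp.single_nonneg.2 zero_le_one i
  | zero => simp
  | add v v' _ _ hv hv' => simpa using add_nonneg hv hv'
  | smul c v _ hv => exact (map_smul Δ.repr (c : ℝ) v).symm ▸ mul_nonneg c.2 hv

namespace IsCoxeterForm

theorem eq_one_of_forall_repr_pos (h : IsCoxeterForm M B Δ) {w : G}
    (hw : ∀ i, 0 < Δ.repr (h.geometricRepresentation cs w (Δ i)) i) : w = 1 := by
  by_contra hw1
  obtain ⟨i, hi⟩ := cs.exists_rightDescent_of_ne_one hw1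
  have hnonpos := repr_nonneg_of_mem_hull (h.neg_geometricRepresentation_apply_mem_hull cs hi) i
  rw [map_neg, Finsupp.neg_apply] at hnonpos
  linarith [hw i]

end IsCoxeterForm

end Discreteness

section RootSystem

variable {κ E G : Type*} [NormedAddCommGroup E] [NormedSpace ℝ E] [Group G] {M : CoxeterMatrix κ}
  {B : LinearMap.BilinForm ℝ E} {Δ : Module.Basis κ ℝ E} (cs : CoxeterSystem M G)

namespace IsCoxeterForm

lemma exists_geometricRepresentation_eq_of_mem_cox (h : IsCoxeterForm M B Δ) {g : E ≃ₗ[ℝ] E}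
    (hg : g ∈ cox B Δ) : ∃ w, ∀ u, h.geometricRepresentation cs w u = g u := by
  induction hg using Subgroup.closure_induction with
  | mem g hg =>
    obtain ⟨i, hi⟩ := hg
    exact ⟨cs.simple i, fun u ↦ by
      rw [h.geometricRepresentation_simple, formReflection_apply, hi]⟩
  | one => exact ⟨1, by simp⟩
  | mul g g' _ _ hg hg' =>
    obtain ⟨w, hw⟩ := hg
    obtain ⟨w', hw'⟩ := hg'
    exact ⟨w * w', by simp [hw, hw']⟩
  | inv g _ hg =>
    obtain ⟨w, hw⟩ := hg
    exact ⟨w⁻¹, fun u ↦ g.injective (by rw [← hw]; simp)⟩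

lemma exists_geometricRepresentation_apply_eq_of_mem_Phi (h : IsCoxeterForm M B Δ) {ρ : E}
    (hρ : ρ ∈ Phi B Δ) : ∃ w i, h.geometricRepresentation cs w (Δ i) = ρ := by
  obtain ⟨g, hg, i, rfl⟩ := hρ
  obtain ⟨w, hw⟩ := h.exists_geometricRepresentation_eq_of_mem_cox cs hg
  exact ⟨w, i, hw _⟩

lemma form_self_of_mem_Phi (h : IsCoxeterForm M B Δ) {ρ : E} (hρ : ρ ∈ Phi B Δ) : B ρ ρ = 1 := by
  obtain ⟨w, i, rfl⟩ := h.exists_geometricRepresentation_apply_eq_of_mem_Phi M.toCoxeterSystem hρ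
  rw [h.form_geometricRepresentation, h.apply_self]

lemma exists_geometricRepresentation_eq_formReflection (h : IsCoxeterForm M B Δ) {ρ : E}
    (hρ : ρ ∈ Phi B Δ) : ∃ w, h.geometricRepresentation cs w = formReflection B ρ := by
  obtain ⟨w, i, rfl⟩ := h.exists_geometricRepresentation_apply_eq_of_mem_Phi cs hρ
  refine ⟨w * cs.simple i * w⁻¹, LinearMap.ext fun u ↦ ?_⟩
  rw [map_mul, map_mul, Module.End.mul_apply, Module.End.mul_apply,
    h.geometricRepresentation_simple, map_formReflection (h.form_geometricRepresentation cs w),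
    Representation.self_inv_apply]

end IsCoxeterForm

end RootSystem

section Normalization

variable {Δ : Module.Basis ι ℝ V}

lemma l1_add (v u : V) : l1 Δ (v + u) = l1 Δ v + l1 Δ u := by
  simp [l1, Finset.sum_add_distrib]

lemma l1_smul (c : ℝ) (v : V) : l1 Δ (c • v) = c * l1 Δ v := by
  simp [l1, Finset.mul_sum]

lemma l1_basis (i : ι) : l1 Δ (Δ i) = 1 := by
  classical simp [l1, Finsupp.single_apply]

lemma continuous_l1 : Continuous (l1 Δ) := by
  have : FiniteDimensional ℝ V := Δ.finiteDimensional_of_finite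
  exact continuous_finsetSum _ fun i _ ↦ (Δ.coord i).continuous_of_finiteDimensional

lemma l1_pos {v : V} (hv : ∀ i, 0 ≤ Δ.repr v i) (hv0 : v ≠ 0) : 0 < l1 Δ v := by
  obtain ⟨i, hi⟩ := DFunLike.ne_iff.1 ((map_ne_zero_iff Δ.repr Δ.repr.injective).2 hv0)
  exact Finset.sum_pos' (fun j _ ↦ hv j) ⟨i, Finset.mem_univ i, (hv i).lt_of_ne' hi⟩

lemma l1_nrm {v : V} (hv : l1 Δ v ≠ 0) : l1 Δ (nrm Δ v) = 1 := by
  rw [nrm, l1_smul, inv_mul_cancel₀ hv]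

end Normalization

section NormalizedRoots

variable {M : CoxeterMatrix ι} {B : LinearMap.BilinForm ℝ V} {Δ : Module.Basis ι ℝ V} {x : V}

namespace IsCoxeterForm

lemma l1_pos_of_mem_posPhi (h : IsCoxeterForm M B Δ) {ρ : V} (hρ : ρ ∈ posPhi B Δ) :
    0 < l1 Δ ρ := by
  refine l1_pos hρ.2 fun hρ0 ↦ ?_
  simpa [hρ0] using h.form_self_of_mem_Phi hρ.1

lemma l1_of_mem_nPhi (h : IsCoxeterForm M B Δ) (hx : x ∈ nPhi B Δ) : l1 Δ x = 1 := by
  obtain ⟨ρ, hρ, rfl⟩ := hx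
  exact l1_nrm (h.l1_pos_of_mem_posPhi hρ).ne'

lemma form_self_ne_zero_of_mem_nPhi (h : IsCoxeterForm M B Δ) (hx : x ∈ nPhi B Δ) :
    B x x ≠ 0 := by
  obtain ⟨ρ, hρ, rfl⟩ := hx
  simp [nrm, h.form_self_of_mem_Phi hρ.1, (h.l1_pos_of_mem_posPhi hρ).ne']

lemma exists_geometricRepresentation_eq_formReflection_of_mem_nPhi {G : Type*} [Group G]
    (cs : CoxeterSystem M G) (h : IsCoxeterForm M B Δ) (hx : x ∈ nPhi B Δ) :
    ∃ w, h.geometricRepresentation cs w = formReflection B x := by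
  obtain ⟨ρ, hρ, rfl⟩ := hx
  rw [nrm, formReflection_smul (inv_ne_zero (h.l1_pos_of_mem_posPhi hρ).ne')]
  exact h.exists_geometricRepresentation_eq_formReflection cs hρ.1

lemma l1_of_mem_Eset (h : IsCoxeterForm M B Δ) {ℓ : V} (hℓ : ℓ ∈ Eset B Δ) : l1 Δ ℓ = 1 :=
  (isClosed_singleton.preimage continuous_l1).closure_subset_iff.2 (fun _ ↦ h.l1_of_mem_nPhi)
    (mem_closure_iff_clusterPt.2 (AccPt.clusterPt hℓ))

end IsCoxeterForm

end NormalizedRoots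

section Continuity

variable {E : Type*} [NormedAddCommGroup E] [NormedSpace ℝ E] [FiniteDimensional ℝ E]

lemma continuous_form_self (B : LinearMap.BilinForm ℝ E) : Continuous fun x ↦ B x x :=
  B.toContinuousBilinearMap.continuous₂.comp (continuous_id.prodMk continuous_id)

variable {B : LinearMap.BilinForm ℝ E}

lemma continuousAt_formReflection_apply {p : E × E} (hp : B p.1 p.1 ≠ 0) :
    ContinuousAt (fun q : E × E ↦ formReflection B q.1 q.2) p := by
  have hB : Continuous fun q : E × E ↦ B q.1 q.2 := B.toContinuousBilinearMap.continuous₂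
  have : Continuous fun q : E × E ↦ B q.1 q.1 := (continuous_form_self B).comp continuous_fst
  simp only [formReflection_apply]
  fun_prop (disch := exact hp)

lemma eventually_repr_formReflection_formReflection_pos {κ : Type*} [Finite κ]
    {Δ : Module.Basis κ ℝ E} {ℓ : E} (hℓ : B ℓ ℓ ≠ 0) :
    ∀ᶠ p : E × E in 𝓝 (ℓ, ℓ), ∀ i,
      0 < Δ.repr (formReflection B p.1 (formReflection B p.2 (Δ i))) i := by
  refine eventually_all.2 fun i ↦ ?_
  have h_inner : ContinuousAt (fun p : E × E ↦ formReflection B p.2 (Δ i)) (ℓ, ℓ) :=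
    (continuousAt_formReflection_apply (p := (ℓ, Δ i)) hℓ).comp_of_eq
      (f := fun p : E × E ↦ (p.2, Δ i)) (by fun_prop) rfl
  have h_outer : ContinuousAt
      (fun p : E × E ↦ formReflection B p.1 (formReflection B p.2 (Δ i))) (ℓ, ℓ) :=
    (continuousAt_formReflection_apply (p := (ℓ, formReflection B ℓ (Δ i))) hℓ).comp_of_eq
      (f := fun p : E × E ↦ (p.1, formReflection B p.2 (Δ i))) (by fun_prop) rfl
  have h_coord : Continuous (Δ.coord i) := (Δ.coord i).continuous_of_finiteDimensional
  refine (h_coord.continuousAt.comp h_outer).eventually_const_lt ?_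
  simp [formReflection_apply_apply hℓ]

end Continuity

section Isotropy

variable {B : LinearMap.BilinForm ℝ V} {Δ : Module.Basis ι ℝ V}

lemma eq_of_formReflection_mul_formReflection_eq_one {x y : V} (hx : l1 Δ x = 1)
    (hy : l1 Δ y = 1) (hBy : B y y ≠ 0) (hxy : formReflection B x * formReflection B y = 1) :
    y = x := by
  have hneg : formReflection B x (-y) = y := by
    simpa [formReflection_apply_self hBy] using LinearMap.congr_fun hxy y
  obtain ⟨c, hc⟩ : ∃ c : ℝ, (2 : ℝ) • y = c • x := by
    rw [formReflection_apply, sub_eq_iff_eq_add] at hneg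
    refine ⟨-(2 * B x (-y) / B x x), ?_⟩
    calc (2 : ℝ) • y = y - -y := by module
      _ = y - (y + (2 * B x (-y) / B x x) • x) := by rw [← hneg]
      _ = -(2 * B x (-y) / B x x) • x := by module
  have hc2 : c = 2 := by simpa [l1_smul, hx, hy] using (congrArg (l1 Δ) hc).symm
  rw [hc2] at hc
  exact smul_right_injective V (two_ne_zero' ℝ) hc

theorem IsCoxeterForm.form_self_eq_zero_of_mem_Eset {M : CoxeterMatrix ι}
    (h : IsCoxeterForm M B Δ) {ℓ : V} (hℓ : ℓ ∈ Eset B Δ) : B ℓ ℓ = 0 := by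
  have : FiniteDimensional ℝ V := Δ.finiteDimensional_of_finite
  by_contra hne
  have hpos := eventually_repr_formReflection_formReflection_pos (Δ := Δ) hne
  rw [nhds_prod_eq] at hpos
  obtain ⟨U, hU, hUU⟩ := eventually_prod_self_iff'.1 hpos
  have hroots := (accPt_iff_frequently.1 hℓ).and_eventually hU
  obtain ⟨x, ⟨hxℓ, hx⟩, hxU⟩ := hroots.exists
  obtain ⟨y, ⟨⟨_, hy⟩, hyU⟩, hyx⟩ := (hroots.and_eventually (isOpen_ne.mem_nhds hxℓ.symm)).exists
  obtain ⟨w, hw⟩ :=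
    h.exists_geometricRepresentation_eq_formReflection_of_mem_nPhi M.toCoxeterSystem hx
  obtain ⟨w', hw'⟩ :=
    h.exists_geometricRepresentation_eq_formReflection_of_mem_nPhi M.toCoxeterSystem hy
  have hww' : w * w' = 1 := h.eq_one_of_forall_repr_pos M.toCoxeterSystem fun i ↦ by
    rw [map_mul, hw, hw']
    exact hUU x hxU y hyU i
  refine hyx (eq_of_formReflection_mul_formReflection_eq_one (h.l1_of_mem_nPhi hx)
    (h.l1_of_mem_nPhi hy) (h.form_self_ne_zero_of_mem_nPhi hy) ?_)
  rw [← hw, ← hw', ← map_mul, hww', map_one]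

end Isotropy

section IsotropicPoint

/-- The solution `τ` of `τ ^ 2 + 2 * b * τ + q = 0` that vanishes at `q = 0`; it is real when
`b ≠ 0` and `q ≤ b ^ 2`. -/
def smallRoot (b q : ℝ) : ℝ := b * (√(1 - q / b ^ 2) - 1)

lemma smallRoot_zero_right (b : ℝ) : smallRoot b 0 = 0 := by simp [smallRoot]

lemma continuousAt_smallRoot {p : ℝ × ℝ} (hp : p.1 ≠ 0) :
    ContinuousAt (fun p : ℝ × ℝ ↦ smallRoot p.1 p.2) p := by
  unfold smallRoot
  fun_prop (disch := exact pow_ne_zero 2 hp)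

lemma smallRoot_sq_add {b q : ℝ} (hb : b ≠ 0) (hq : q ≤ b ^ 2) :
    smallRoot b q ^ 2 + 2 * b * smallRoot b q + q = 0 := by
  have hsqrt : √(1 - q / b ^ 2) ^ 2 = 1 - q / b ^ 2 :=
    sq_sqrt (sub_nonneg.2 (div_le_one_of_le₀ hq (sq_nonneg b)))
  have hdiv : b ^ 2 * (q / b ^ 2) = q := mul_div_cancel₀ q (pow_ne_zero 2 hb)
  rw [smallRoot]
  linear_combination b ^ 2 * hsqrt - hdiv

variable {B : LinearMap.BilinForm ℝ V} {Δ : Module.Basis ι ℝ V} {i : ι} {x ℓ : V}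

lemma continuousAt_smallRoot_form {E : Type*} [NormedAddCommGroup E] [NormedSpace ℝ E]
    [FiniteDimensional ℝ E] {B : LinearMap.BilinForm ℝ E} {a v : E} (hav : B a v ≠ 0) :
    ContinuousAt (fun x ↦ smallRoot (B a x) (B x x)) v :=
  (continuousAt_smallRoot (p := (B a v, B v v)) hav).comp_of_eq
    (f := fun x ↦ (B a x, B x x))
    ((B a).continuous_of_finiteDimensional.prodMk (continuous_form_self B)).continuousAt rfl

variable (B Δ) in
/-- The intersection of the line through `Δ i` and `x` with the normalized isotropic cone, namely
the one of the two intersection points that is near `x` when `B x x` is small. -/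
def isotropicPoint (i : ι) (x : V) : V :=
  nrm Δ (x + smallRoot (B (Δ i) x) (B x x) • Δ i)

lemma isotropicPoint_eq_self (hiso : B ℓ ℓ = 0) (hl1 : l1 Δ ℓ = 1) :
    isotropicPoint B Δ i ℓ = ℓ := by
  simp [isotropicPoint, nrm, hiso, hl1, smallRoot_zero_right]

lemma l1_add_smul_basis (hx : l1 Δ x = 1) (τ : ℝ) : l1 Δ (x + τ • Δ i) = 1 + τ := by
  rw [l1_add, l1_smul, l1_basis, hx, mul_one]

lemma continuousAt_isotropicPoint (hi : B (Δ i) ℓ ≠ 0) (hiso : B ℓ ℓ = 0) (hl1 : l1 Δ ℓ = 1) :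
    ContinuousAt (isotropicPoint B Δ i) ℓ := by
  have : FiniteDimensional ℝ V := Δ.finiteDimensional_of_finite
  have hroot := continuousAt_smallRoot_form hi
  have hpoint : ContinuousAt (fun x ↦ x + smallRoot (B (Δ i) x) (B x x) • Δ i) ℓ := by fun_prop
  refine ((continuous_l1.continuousAt.comp hpoint).inv₀ ?_).smul hpoint
  simp [hiso, smallRoot_zero_right, hl1]

lemma form_add_smallRoot_smul_self (hB : B.IsSymm) {a : V} (ha : B a a = 1) (hax : B a x ≠ 0)
    (hq : B x x ≤ B a x ^ 2) :
    B (x + smallRoot (B a x) (B x x) • a) (x + smallRoot (B a x) (B x x) • a) = 0 := by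
  simp only [map_add, map_smul, LinearMap.add_apply, LinearMap.smul_apply, smul_eq_mul, ha,
    hB.eq x a]
  linear_combination smallRoot_sq_add hax hq

lemma nrm_add_smul_mem_lineThrough (hx : l1 Δ x = 1) {τ : ℝ} (hτ : 1 + τ ≠ 0) :
    nrm Δ (x + τ • Δ i) ∈ lineThrough (Δ i) x := by
  refine ⟨(1 + τ)⁻¹, ?_⟩
  rw [nrm, l1_add_smul_basis hx]
  have hinv : (1 + τ)⁻¹ * τ = 1 - (1 + τ)⁻¹ := by field_simp; ring
  rw [smul_add, smul_smul, hinv]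
  module

lemma IsCoxeterForm.isotropicPoint_mem_E2circ {M : CoxeterMatrix ι} (h : IsCoxeterForm M B Δ)
    (hx : x ∈ nPhi B Δ) (hxi : x ≠ Δ i) (hi : B (Δ i) x ≠ 0) (hq : B x x ≤ B (Δ i) x ^ 2)
    (hroot : 1 + smallRoot (B (Δ i) x) (B x x) ≠ 0) :
    isotropicPoint B Δ i x ∈ E2circ B Δ := by
  have hl1 := h.l1_of_mem_nPhi hx
  obtain ⟨ρ, hρ, rfl⟩ := hx
  refine ⟨i, ρ, hρ, hxi, nrm_add_smul_mem_lineThrough hl1 hroot, ?_, ?_⟩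
  · rw [isotropicPoint, nrm, map_smul, map_smul, LinearMap.smul_apply,
      form_add_smallRoot_smul_self h.isSymm (h.apply_self i) hi hq, smul_zero, smul_zero]
  · exact l1_nrm (by rwa [l1_add_smul_basis hl1])

lemma IsCoxeterForm.eventually_isotropicPoint_mem_E2circ {M : CoxeterMatrix ι}
    (h : IsCoxeterForm M B Δ) (hi : B (Δ i) ℓ ≠ 0) (hiso : B ℓ ℓ = 0) :
    ∀ᶠ x in 𝓝 ℓ, x ∈ nPhi B Δ → isotropicPoint B Δ i x ∈ E2circ B Δ := by
  have : FiniteDimensional ℝ V := Δ.finiteDimensional_of_finite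
  have hb : Continuous (B (Δ i)) := (B (Δ i)).continuous_of_finiteDimensional
  have hℓi : ℓ ≠ Δ i := by
    rintro rfl
    exact h.apply_self_ne_zero i hiso
  have hroot : ∀ᶠ x in 𝓝 ℓ, 1 + smallRoot (B (Δ i) x) (B x x) ≠ 0 :=
    (continuousAt_const.add (continuousAt_smallRoot_form hi)).eventually_ne
      (by simp [hiso, smallRoot_zero_right])
  have hdisc : ∀ᶠ x in 𝓝 ℓ, B x x < B (Δ i) x ^ 2 :=
    (continuous_form_self B).continuousAt.eventually_lt (hb.pow 2).continuousAt
      (by rw [hiso]; positivity)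
  filter_upwards [eventually_ne_nhds hℓi, hb.continuousAt.eventually_ne hi, hdisc, hroot]
    with x hxi hbx hqx hτx hx
  exact h.isotropicPoint_mem_E2circ hx hxi hbx hqx.le hτx

end IsotropicPoint

section Radical

lemma exists_form_basis_apply_ne_zero {κ E : Type*} [AddCommGroup E] [Module ℝ E]
    {B : LinearMap.BilinForm ℝ E} (hB : B.IsSymm) (Δ : Module.Basis κ ℝ E) {v : E}
    (hv : ¬∀ u, B v u = 0) : ∃ i, B (Δ i) v ≠ 0 := by
  by_contra! hΔ
  have hBv : B v = 0 := Δ.ext fun i ↦ by rw [hB.eq, hΔ i, LinearMap.zero_apply]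
  exact hv fun u ↦ by rw [hBv, LinearMap.zero_apply]

end Radical

end Development

/-- If `ℓ ∈ E(Φ)` does not lie in the radical `V^⊥ = {v | ∀ u, B v u = 0}` of `B`,
then `ℓ` lies in the topological closure of `E₂°`. -/
theorem statement17 (B : LinearMap.BilinForm ℝ V) (Δ : Module.Basis ι ℝ V)
    (hsymm : ∀ u v : V, B u v = B v u)
    (hdiag : ∀ i : ι, B (Δ i) (Δ i) = 1)
    (hoff : ∀ i j : ι, i ≠ j → B (Δ i) (Δ j) ≤ -1 ∨
      ∃ k : ℕ, 2 ≤ k ∧ B (Δ i) (Δ j) = -Real.cos (Real.pi / (k : ℝ)))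
    (ℓ : V) (hℓ : ℓ ∈ Eset B Δ) (hrad : ¬ ∀ u : V, B ℓ u = 0) :
    ℓ ∈ closure (E2circ B Δ) := by
  obtain ⟨M, h⟩ := exists_coxeterMatrix_isCoxeterForm ⟨hsymm⟩ hdiag hoff
  have hiso := h.form_self_eq_zero_of_mem_Eset hℓ
  have hl1 := h.l1_of_mem_Eset hℓ
  obtain ⟨i, hi⟩ := exists_form_basis_apply_ne_zero h.isSymm Δ hrad
  have htendsto : Tendsto (isotropicPoint B Δ i) (𝓝 ℓ) (𝓝 ℓ) := by
    simpa only [ContinuousAt, isotropicPoint_eq_self hiso hl1] using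
      continuousAt_isotropicPoint hi hiso hl1
  have hroots : ∃ᶠ x in 𝓝 ℓ, x ∈ nPhi B Δ := (accPt_iff_frequently.1 hℓ).mono fun _ hx ↦ hx.2
  have hmem := (hroots.and_eventually (h.eventually_isotropicPoint_mem_E2circ hi hiso)).mono
    fun _ hx ↦ hx.2 hx.1
  exact mem_closure_of_frequently_of_tendsto hmem htendsto
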